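/- arXiv:1911.05425 — 2 statements merged into one kernel-verified Lean document; each statement's English description precedes it below -/
import Mathlib

section
/- Let c ∈ [0,1), s = √(1−c²), and let f be defined by f(x) = (1/16)·( ((σ_3/64)x² + (c/4)x − s²)² − (1/16)(1 − σ_2 + 2σ_3)c²x² + (1/16)(2 − σ_1)x² − c(x − 8c) )² − (64 + u_1²u_2²u_3²x²)·( x/32 − c/8 − c³/8 + (σ_3/512)c x² )², with u_1 = √(2(2+√2)) − 1 − √2, u_2 = √(2+√2) − 1, u_3 = 1 + √2 − √(2+√2), σ_1 = (1−u_1²)+(1−u_2²)+(1−u_3²), σ_2 = (1−u_1²)(1−u_2²)+(1−u_1²)(1−u_3²)+(1−u_2²)(1−u_3²), σ_3 = (1−u_1²)(1−u_2²)(1−u_3²). Let ζ₋ be the largest negative zero of f. If c > 0, then every positive zero ζ₊ of f satisfies ζ₊ > −ζ₋. If c = 0, then f is an even function, f has a positive zero, and the smallest positive zero of f equals −ζ₋. -/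
open Real

noncomputable def u1 : ℝ := Real.sqrt (2 * (2 + Real.sqrt 2)) - 1 - Real.sqrt 2

noncomputable def u2 : ℝ := Real.sqrt (2 + Real.sqrt 2) - 1

noncomputable def u3 : ℝ := 1 + Real.sqrt 2 - Real.sqrt (2 + Real.sqrt 2)

noncomputable def σ1 : ℝ := (1 - u1 ^ 2) + (1 - u2 ^ 2) + (1 - u3 ^ 2)

noncomputable def σ2 : ℝ :=
  (1 - u1 ^ 2) * (1 - u2 ^ 2) + (1 - u1 ^ 2) * (1 - u3 ^ 2) + (1 - u2 ^ 2) * (1 - u3 ^ 2)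

noncomputable def σ3 : ℝ := (1 - u1 ^ 2) * (1 - u2 ^ 2) * (1 - u3 ^ 2)

/-- The resolvent function `f` of the quartic G⁰ interpolation problem
(equation (6) of the paper). -/
noncomputable def quarticF (c s x : ℝ) : ℝ :=
  (1 / 16) * (((σ3 / 64) * x ^ 2 + (c / 4) * x - s ^ 2) ^ 2
      - (1 / 16) * (1 - σ2 + 2 * σ3) * c ^ 2 * x ^ 2
      + (1 / 16) * (2 - σ1) * x ^ 2 - c * (x - 8 * c)) ^ 2
    - (64 + u1 ^ 2 * u2 ^ 2 * u3 ^ 2 * x ^ 2)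
      * (x / 32 - c / 8 - c ^ 3 / 8 + (σ3 / 512) * c * x ^ 2) ^ 2

/-- `quarticF` with its numerical constants abstracted: `p = σ3 / 64`, `q = 1 - σ2 + 2 σ3`,
`m = 2 - σ1`, `k = u1² u2² u3²`, and `s²` replaced by `1 - c²`. -/
noncomputable def quarticAux (p q m k c x : ℝ) : ℝ :=
  (1 / 16) * ((p * x ^ 2 + (c / 4) * x - (1 - c ^ 2)) ^ 2
      - (1 / 16) * q * c ^ 2 * x ^ 2
      + (1 / 16) * m * x ^ 2 - c * (x - 8 * c)) ^ 2
    - (64 + k * x ^ 2)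
      * (x / 32 - c / 8 - c ^ 3 / 8 + (p / 8) * c * x ^ 2) ^ 2

theorem quarticF_eq_quarticAux {c s : ℝ} (hs : s ^ 2 = 1 - c ^ 2) (x : ℝ) :
    quarticF c s x = quarticAux (σ3 / 64) (1 - σ2 + 2 * σ3) (2 - σ1)
      (u1 ^ 2 * u2 ^ 2 * u3 ^ 2) c x := by
  simp only [quarticF, quarticAux, hs]
  ring

theorem sqrt_two_mem : Real.sqrt 2 ∈ Set.Icc (1.4142 : ℝ) 1.4143 :=
  ⟨Real.le_sqrt_of_sq_le (by norm_num), Real.sqrt_le_iff.2 (by norm_num)⟩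

theorem sqrt_two_add_sqrt_two_mem :
    Real.sqrt (2 + Real.sqrt 2) ∈ Set.Icc (1.847 : ℝ) 1.848 := by
  obtain ⟨h1, h2⟩ := sqrt_two_mem
  exact ⟨Real.le_sqrt_of_sq_le (by norm_num at h1 ⊢; linarith),
    Real.sqrt_le_iff.2 ⟨by norm_num, by norm_num at h2 ⊢; linarith⟩⟩

theorem one_sub_u1_sq_mem : 1 - u1 ^ 2 ∈ Set.Icc (0.95 : ℝ) 0.97 := by
  obtain ⟨h1, h2⟩ := sqrt_two_mem
  have h3 : (2.613 : ℝ) ≤ Real.sqrt (2 * (2 + Real.sqrt 2)) :=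
    Real.le_sqrt_of_sq_le (by norm_num at h1 ⊢; linarith)
  have h4 : Real.sqrt (2 * (2 + Real.sqrt 2)) ≤ 2.614 :=
    Real.sqrt_le_iff.2 ⟨by norm_num, by norm_num at h2 ⊢; linarith⟩
  have h5 : (0.198 : ℝ) ≤ u1 := by unfold u1; norm_num at *; linarith
  have h6 : u1 ≤ 0.2 := by unfold u1; norm_num at *; linarith
  norm_num at h5 h6
  constructor <;> norm_num <;> nlinarith

theorem one_sub_u2_sq_mem : 1 - u2 ^ 2 ∈ Set.Icc (0.278 : ℝ) 0.285 := by
  obtain ⟨h3, h4⟩ := sqrt_two_add_sqrt_two_mem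
  have h5 : (0.847 : ℝ) ≤ u2 := by unfold u2; norm_num at *; linarith
  have h6 : u2 ≤ 0.848 := by unfold u2; norm_num at *; linarith
  norm_num at h5 h6
  constructor <;> norm_num <;> nlinarith

theorem one_sub_u3_sq_mem : 1 - u3 ^ 2 ∈ Set.Icc (0.675 : ℝ) 0.685 := by
  obtain ⟨h1, h2⟩ := sqrt_two_mem
  obtain ⟨h3, h4⟩ := sqrt_two_add_sqrt_two_mem
  have h5 : (0.566 : ℝ) ≤ u3 := by unfold u3; norm_num at *; linarith
  have h6 : u3 ≤ 0.568 := by unfold u3; norm_num at *; linarith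
  norm_num at h5 h6
  constructor <;> norm_num <;> nlinarith

theorem σ1_mem : 2 - σ1 ∈ Set.Icc (0 : ℝ) (1 / 8) := by
  obtain ⟨a1, a2⟩ := one_sub_u1_sq_mem
  obtain ⟨b1, b2⟩ := one_sub_u2_sq_mem
  obtain ⟨d1, d2⟩ := one_sub_u3_sq_mem
  norm_num at *
  unfold σ1
  constructor <;> linarith

theorem σ3_mem : σ3 ∈ Set.Icc (0.17 : ℝ) 0.2 := by
  obtain ⟨a1, a2⟩ := one_sub_u1_sq_mem
  obtain ⟨b1, b2⟩ := one_sub_u2_sq_mem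
  obtain ⟨d1, d2⟩ := one_sub_u3_sq_mem
  unfold σ3
  generalize 1 - u1 ^ 2 = a at *
  generalize 1 - u2 ^ 2 = b at *
  generalize 1 - u3 ^ 2 = d at *
  constructor
  · calc (0.17 : ℝ) ≤ 0.95 * 0.278 * 0.675 := by norm_num
      _ ≤ a * b * d := by gcongr
  · have : 0 ≤ a := by norm_num at *; linarith
    have : 0 ≤ b := by norm_num at *; linarith
    have : 0 ≤ d := by norm_num at *; linarith
    calc a * b * d ≤ 0.97 * 0.285 * 0.685 := by gcongr
      _ ≤ 0.2 := by norm_num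

theorem σ2_σ3_mem : 1 - σ2 + 2 * σ3 ∈ Set.Icc (0 : ℝ) 1 := by
  obtain ⟨a1, a2⟩ := one_sub_u1_sq_mem
  obtain ⟨b1, b2⟩ := one_sub_u2_sq_mem
  obtain ⟨d1, d2⟩ := one_sub_u3_sq_mem
  obtain ⟨e1, e2⟩ := σ3_mem
  unfold σ2
  generalize 1 - u1 ^ 2 = a at *
  generalize 1 - u2 ^ 2 = b at *
  generalize 1 - u3 ^ 2 = d at *
  norm_num at *
  constructor <;> nlinarith

section

variable {p q m k c : ℝ}

theorem continuous_quarticAux : Continuous (quarticAux p q m k c) := by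
  unfold quarticAux
  fun_prop

theorem quarticAux_zero_pos (h0 : 0 ≤ c) (h1 : c < 1) : 0 < quarticAux p q m k c 0 := by
  have h : quarticAux p q m k c 0 = (1 - c ^ 2) ^ 4 / 16 := by
    unfold quarticAux
    ring
  rw [h]
  have : 0 < 1 - c ^ 2 := by nlinarith
  positivity

theorem exists_neg_zero (h0 : 0 ≤ c) (h1 : c < 1) {x : ℝ} (hx : 0 < x)
    (hneg : quarticAux p q m k c (-x) < 0) :
    ∃ z, -x < z ∧ z < 0 ∧ quarticAux p q m k c z = 0 := by
  obtain ⟨z, ⟨hz1, hz2⟩, hz⟩ := intermediate_value_Ioo (neg_nonpos.2 hx.le)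
    (continuous_quarticAux (p := p) (q := q) (m := m) (k := k) (c := c)).continuousOn
    ⟨hneg, quarticAux_zero_pos h0 h1⟩
  exact ⟨z, hz1, hz2, hz⟩

/-- The explicit point `-(11/10)(1-c)²` lies beyond the largest negative zero. -/
theorem quarticAux_neg_of_point (hp0 : 0 ≤ p) (hp : p ≤ 1 / 320) (hq0 : 0 ≤ q) (hq : q ≤ 1)
    (hm0 : 0 ≤ m) (hm : m ≤ 1 / 8) (hk : 0 ≤ k) (h0 : 0 ≤ c) (h1 : c < 1) :
    quarticAux p q m k c (-(11 / 10 * (1 - c) ^ 2)) < 0 := by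
  obtain ⟨t, ht⟩ : ∃ t : ℝ, t = 11 / 10 * (1 - c) ^ 2 := ⟨_, rfl⟩
  rw [← ht]
  have he : 0 < 1 - c := by linarith
  have he4 : 0 < (1 - c) ^ 4 := by positivity
  have ht0 : 0 < t := by rw [ht]; positivity
  have ht1 : t ≤ 11 / 10 := by nlinarith
  have hpt : 0 ≤ p * t := by positivity
  have hpt' : p * t ≤ 11 / 3200 := by nlinarith
  set N : ℝ := (p * t ^ 2 - c / 4 * t - (1 - c ^ 2)) ^ 2 - 1 / 16 * q * c ^ 2 * t ^ 2
    + 1 / 16 * m * t ^ 2 + c * (t + 8 * c) with hN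
  set D : ℝ := t / 32 + c / 8 + c ^ 3 / 8 - p / 8 * c * t ^ 2 with hD
  have hval : quarticAux p q m k c (-t) = N ^ 2 / 16 - (64 + k * t ^ 2) * D ^ 2 := by
    rw [hN, hD]
    unfold quarticAux
    ring
  have hN0 : 0 ≤ N := by
    have ht2 : t ^ 2 ≤ 2 := by nlinarith
    have h2 : q * t ^ 2 ≤ 2 := by
      calc q * t ^ 2 ≤ 1 * 2 := by gcongr
        _ = 2 := by norm_num
    have h3 : q * t ^ 2 * c ^ 2 ≤ 2 * c ^ 2 := by gcongr
    have h4 : 0 ≤ m * t ^ 2 := by positivity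
    have h5 : 0 ≤ c * t := by positivity
    rw [hN]
    linarith [sq_nonneg (p * t ^ 2 - c / 4 * t - (1 - c ^ 2)), sq_nonneg c]
  have hND : N / 4 < 8 * D := by
    have key : 8 * D - N / 4 = (1 - c) ^ 4 * (11 / 10 * (2 + c) / 8 - 1 / 4
        - 121 / 100 * (p * (c - (1 - c ^ 2) / 2) + (m - q * c ^ 2) / 64
          + (c / 4 - p * t) ^ 2 / 4)) := by
      rw [hD, hN, ht]
      ring
    have hb1 : p * (c - (1 - c ^ 2) / 2) ≤ 1 / 320 * c := by
      have : 0 ≤ p * (1 - c ^ 2) := mul_nonneg hp0 (by nlinarith only [h0, h1])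
      have : p * c ≤ 1 / 320 * c := by gcongr
      linarith
    have hb2 : (m - q * c ^ 2) / 64 ≤ 1 / 512 := by
      have : 0 ≤ q * c ^ 2 := by positivity
      linarith
    have hb3 : (c / 4 - p * t) ^ 2 ≤ c / 16 + 1 / 1000 := by
      have h2 : 0 ≤ c * (p * t) := by positivity
      have h3 : (p * t) ^ 2 ≤ (11 / 3200) ^ 2 := by gcongr
      have h4 : c ^ 2 ≤ c := by nlinarith only [h0, h1]
      linarith
    have : 0 < 8 * D - N / 4 := by
      rw [key]
      refine mul_pos he4 ?_
      linarith
    linarith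
  rw [hval]
  have h2 : (N / 4) ^ 2 < (8 * D) ^ 2 := by gcongr
  have h3 : 0 ≤ k * t ^ 2 * D ^ 2 := by positivity
  linarith

/-- For `c > 0`, the odd part of the resolvent is positive near `0`. -/
theorem quarticAux_neg_lt (hp0 : 0 ≤ p) (hp : p ≤ 1 / 320) (hq0 : 0 ≤ q)
    (hm : m ≤ 1 / 8) (hk : 0 ≤ k) (h0 : 0 < c) (h1 : c < 1)
    {x : ℝ} (hx : 0 < x) (hxt : x ≤ 11 / 10 * (1 - c) ^ 2) :
    quarticAux p q m k c (-x) < quarticAux p q m k c x := by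
  set S : ℝ := 1 - c ^ 2 with hS
  have hS0 : 0 < S := by nlinarith
  have hcS : (1 - c) ^ 2 ≤ S := by nlinarith
  have hz : x ^ 2 ≤ 121 / 100 * S ^ 2 := by
    have : x ≤ 11 / 10 * S := by linarith
    nlinarith
  have hS1 : S ≤ 1 := by nlinarith
  have hz2 : x ^ 2 ≤ 121 / 100 := by nlinarith
  have hpz0 : 0 ≤ p * x ^ 2 := by positivity
  have hpz : p * x ^ 2 ≤ 1 / 320 * x ^ 2 := by gcongr
  have hpzS : p * x ^ 2 ≤ S := by nlinarith
  set E : ℝ := (S - p * x ^ 2) ^ 2 + (1 - q) * c ^ 2 * x ^ 2 / 16 + m * x ^ 2 / 16 + 8 * c ^ 2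
    with hE
  have hval : quarticAux p q m k c x - quarticAux p q m k c (-x) =
      c * x * ((1 + c ^ 2 - p * x ^ 2) - E * (2 + S - p * x ^ 2) / 8
        + k * x ^ 2 * (1 + c ^ 2 - p * x ^ 2) / 64) := by
    rw [hE, hS]
    unfold quarticAux
    ring
  have hE1 : E ≤ S ^ 2 + 8 * c ^ 2 + x ^ 2 / 8 := by
    have h2 : (S - p * x ^ 2) ^ 2 ≤ S ^ 2 := by gcongr; linarith
    have h3 : 0 ≤ q * (c ^ 2 * x ^ 2) := by positivity
    have h4 : c ^ 2 * x ^ 2 ≤ 1 * x ^ 2 := by gcongr; nlinarith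
    have h5 : m * x ^ 2 ≤ 1 / 8 * x ^ 2 := by gcongr
    rw [hE]
    linarith
  have hW : 2 + S - p * x ^ 2 ≤ 2 + S := by linarith
  have hEW : E * (2 + S - p * x ^ 2) ≤ (S ^ 2 + 8 * c ^ 2 + x ^ 2 / 8) * (2 + S) := by
    gcongr
    linarith
  have hT : 0 ≤ 1 + c ^ 2 - p * x ^ 2 := by nlinarith
  have hkT : 0 ≤ k * x ^ 2 * (1 + c ^ 2 - p * x ^ 2) := by positivity
  have hid : 8 * (1 + c ^ 2) - (S ^ 2 + 8 * c ^ 2) * (2 + S) = S ^ 2 * (6 - S) := by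
    rw [hS]
    ring
  have hxS : x ^ 2 * S ≤ x ^ 2 := mul_le_of_le_one_right (sq_nonneg x) hS1
  have hS6 : S ^ 2 * 5 ≤ S ^ 2 * (6 - S) := by gcongr; linarith
  have hSS : 0 < S ^ 2 := by positivity
  have hpos : 0 < (1 + c ^ 2 - p * x ^ 2) - E * (2 + S - p * x ^ 2) / 8
        + k * x ^ 2 * (1 + c ^ 2 - p * x ^ 2) / 64 := by
    linarith
  have := mul_pos (mul_pos h0 hx) hpos
  linarith

theorem exists_neg_zero_of_pos_zero (hp0 : 0 ≤ p) (hp : p ≤ 1 / 320) (hq0 : 0 ≤ q) (hq : q ≤ 1)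
    (hm0 : 0 ≤ m) (hm : m ≤ 1 / 8) (hk : 0 ≤ k) (h0 : 0 < c) (h1 : c < 1)
    {x : ℝ} (hx : 0 < x) (hfx : quarticAux p q m k c x = 0) :
    ∃ z, -x < z ∧ z < 0 ∧ quarticAux p q m k c z = 0 := by
  rcases le_or_gt x (11 / 10 * (1 - c) ^ 2) with h | h
  · exact exists_neg_zero h0.le h1 hx
      (hfx ▸ quarticAux_neg_lt hp0 hp hq0 hm hk h0 h1 hx h)
  · have he : 0 < 1 - c := by linarith
    obtain ⟨z, hz1, hz2, hz⟩ := exists_neg_zero h0.le h1 (by positivity)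
      (quarticAux_neg_of_point hp0 hp hq0 hq hm0 hm hk h0.le h1)
    exact ⟨z, by linarith, hz2, hz⟩

end

theorem quarticF_zero_even (s x : ℝ) : quarticF 0 s (-x) = quarticF 0 s x := by
  unfold quarticF
  ring

/-- Lemma 3 of the paper: let `ζ₋` be the largest negative zero of the resolvent `f`.
If `c > 0` then every positive zero of `f` exceeds `−ζ₋`; if `c = 0` then `f` is even,
has a positive zero, and its smallest positive zero equals `−ζ₋`. -/
theorem stmt_16 (c : ℝ) (hc : c ∈ Set.Ico (0 : ℝ) 1) (s : ℝ)
    (hs : s = Real.sqrt (1 - c ^ 2))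
    (ζm : ℝ) (hζm : IsGreatest {z : ℝ | z < 0 ∧ quarticF c s z = 0} ζm) :
    (0 < c → ∀ ζp : ℝ, 0 < ζp → quarticF c s ζp = 0 → -ζm < ζp) ∧
    (c = 0 →
      (∀ x : ℝ, quarticF c s (-x) = quarticF c s x) ∧
      (∃ ζp : ℝ, 0 < ζp ∧ quarticF c s ζp = 0) ∧
      IsLeast {z : ℝ | 0 < z ∧ quarticF c s z = 0} (-ζm)) := by
  obtain ⟨h0, h1⟩ := hc
  obtain ⟨⟨hneg, hzero⟩, hmax⟩ := hζm
  have hs2 : s ^ 2 = 1 - c ^ 2 := by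
    rw [hs, Real.sq_sqrt (by nlinarith)]
  refine ⟨fun hc0 x hx hfx => ?_, ?_⟩
  · obtain ⟨hp0, hp⟩ := σ3_mem
    norm_num at hp0 hp
    obtain ⟨z, hz1, hz2, hz⟩ := exists_neg_zero_of_pos_zero (p := σ3 / 64) (by linarith)
      (by linarith) σ2_σ3_mem.1 σ2_σ3_mem.2 σ1_mem.1 σ1_mem.2
      (k := u1 ^ 2 * u2 ^ 2 * u3 ^ 2) (by positivity) hc0 h1 hx
      (quarticF_eq_quarticAux hs2 x ▸ hfx)
    have := hmax ⟨hz2, (quarticF_eq_quarticAux hs2 z).trans hz⟩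
    linarith
  · rintro rfl
    have hpos : 0 < -ζm ∧ quarticF 0 s (-ζm) = 0 :=
      ⟨neg_pos.2 hneg, (quarticF_zero_even s ζm).trans hzero⟩
    refine ⟨quarticF_zero_even s, ⟨_, hpos⟩, hpos, fun z ⟨hz, hfz⟩ => ?_⟩
    have := hmax ⟨neg_neg_of_pos hz, (quarticF_zero_even s z).trans hfz⟩
    linarith
end

section
/- Let c ∈ [0,1), s = √(1−c²), and let f be defined by f(x) = (1/16)·( ((σ_3/64)x² + (c/4)x − s²)² − (1/16)(1 − σ_2 + 2σ_3)c²x² + (1/16)(2 − σ_1)x² − c(x − 8c) )² − (64 + u_1²u_2²u_3²x²)·( x/32 − c/8 − c³/8 + (σ_3/512)c x² )², with u_1 = √(2(2+√2)) − 1 − √2, u_2 = √(2+√2) − 1, u_3 = 1 + √2 − √(2+√2), σ_1 = (1−u_1²)+(1−u_2²)+(1−u_3²), σ_2 = (1−u_1²)(1−u_2²)+(1−u_1²)(1−u_3²)+(1−u_2²)(1−u_3²), σ_3 = (1−u_1²)(1−u_2²)(1−u_3²). Then f'(x) > 0 for all x ∈ (−(1−c)², 0), and f has exactly one zero on the interval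 [−(1−c)², 0]. -/
open Real

lemma u_bounds : 0.1985 ≤ u1 ∧ u1 ≤ 0.1993 ∧ 0.8477 ≤ u2 ∧ u2 ≤ 0.8478 ∧
    0.5663 ≤ u3 ∧ u3 ≤ 0.5666 := by
  have h1 : (1.4142 : ℝ) ≤ √2 := Real.le_sqrt_of_sq_le (by norm_num)
  have h2 : √2 ≤ (1.4143 : ℝ) := Real.sqrt_le_iff.2 (by norm_num)
  have h3 : (1.8477 : ℝ) ≤ √(2 + √2) := Real.le_sqrt_of_sq_le (by norm_num at *; linarith)
  have h4 : √(2 + √2) ≤ (1.8478 : ℝ) :=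
    Real.sqrt_le_iff.2 ⟨by norm_num, by norm_num at *; linarith⟩
  have h5 : (2.6130 : ℝ) ≤ √(2 * (2 + √2)) :=
    Real.le_sqrt_of_sq_le (by norm_num at *; linarith)
  have h6 : √(2 * (2 + √2)) ≤ (2.6132 : ℝ) :=
    Real.sqrt_le_iff.2 ⟨by norm_num, by norm_num at *; linarith⟩
  unfold u1 u2 u3
  norm_num at *
  refine ⟨?_, ?_, ?_, ?_, ?_, ?_⟩ <;> linarith

lemma one_sub_sq_bounds : 0.9602 ≤ 1 - u1 ^ 2 ∧ 1 - u1 ^ 2 ≤ 0.9606 ∧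
    0.2812 ≤ 1 - u2 ^ 2 ∧ 1 - u2 ^ 2 ≤ 0.2815 ∧
    0.6789 ≤ 1 - u3 ^ 2 ∧ 1 - u3 ^ 2 ≤ 0.6794 := by
  obtain ⟨h1, h2, h3, h4, h5, h6⟩ := u_bounds
  norm_num at *
  refine ⟨?_, ?_, ?_, ?_, ?_, ?_⟩ <;> nlinarith

lemma σ_bounds : 1.92 ≤ σ1 ∧ σ1 ≤ 2 ∧ 0 ≤ 1 - σ2 + 2 * σ3 ∧ 1 - σ2 + 2 * σ3 ≤ 0.256 ∧
    0.1824 ≤ σ3 ∧ σ3 ≤ 0.192 := by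
  unfold σ1 σ2 σ3
  obtain ⟨h1, h2, h3, h4, h5, h6⟩ := one_sub_sq_bounds
  generalize 1 - u1 ^ 2 = a at *
  generalize 1 - u2 ^ 2 = b at *
  generalize 1 - u3 ^ 2 = e at *
  norm_num at h1 h2 h3 h4 h5 h6
  have ab1 := mul_le_mul h1 h3 (by norm_num) (by linarith)
  have ab2 := mul_le_mul h2 h4 (by linarith) (by norm_num)
  have ae1 := mul_le_mul h1 h5 (by norm_num) (by linarith)
  have ae2 := mul_le_mul h2 h6 (by linarith) (by norm_num)
  have be1 := mul_le_mul h3 h5 (by norm_num) (by linarith)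
  have be2 := mul_le_mul h4 h6 (by linarith) (by norm_num)
  have abe1 := mul_le_mul ab1 h5 (by norm_num) (by nlinarith)
  have abe2 := mul_le_mul ab2 h6 (by linarith) (by norm_num)
  norm_num at *
  refine ⟨?_, ?_, ?_, ?_, ?_, ?_⟩ <;> linarith

/-- The lower factor of the difference of squares in the resolvent. -/
noncomputable def lowerFactor (m n k c x : ℝ) : ℝ :=
  (1 - c) ^ 4 + (1 - c) ^ 2 * (1 + c / 2) * x
    + x ^ 2 * (n - k * c ^ 2 + 4 * m * c - 2 * (1 - c ^ 2) * m + (m * x + c / 4) ^ 2)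

/-- The upper factor of the difference of squares in the resolvent. -/
noncomputable def upperFactor (m n k c x : ℝ) : ℝ :=
  (1 + c) ^ 4 - (1 + c) * (1 + (1 - c) * c / 2) * x
    + x ^ 2 * (n - k * c ^ 2 - 4 * m * c - 2 * (1 - c ^ 2) * m + (m * x + c / 4) ^ 2)

/-- Half the difference of the upper and the lower factor. -/
noncomputable def correction (m c x : ℝ) : ℝ := 4 * c * (1 + c ^ 2) - x - 4 * m * c * x ^ 2

lemma quarticF_eq {c s : ℝ} (hs : s ^ 2 = 1 - c ^ 2) (x : ℝ) :
    quarticF c s x = (1 / 16) *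
      (lowerFactor (σ3 / 64) ((2 - σ1) / 16) ((1 - σ2 + 2 * σ3) / 16) c x
          * upperFactor (σ3 / 64) ((2 - σ1) / 16) ((1 - σ2 + 2 * σ3) / 16) c x
        - (u1 * u2 * u3 / 8) ^ 2 * (x * correction (σ3 / 64) c x) ^ 2) := by
  unfold quarticF lowerFactor upperFactor correction
  rw [hs]
  ring

lemma hasDerivAt_quad_mul (a b e q m r x : ℝ) :
    HasDerivAt (fun x => a + b * x + x ^ 2 * (e + (m * x + r) ^ 2) + q)
      (b + x * (2 * (e + (m * x + r) ^ 2) + x * (2 * m * (m * x + r)))) x := by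
  have h := (hasDerivAt_id' x)
  have h1 := (((h.const_mul b).const_add a).add
    ((h.pow 2).mul ((((h.const_mul m).add_const r).pow 2).const_add e))).add_const q
  refine (h1.congr_deriv ?_)
  simp
  ring

section Factors

variable {m n k c x : ℝ}

lemma hasDerivAt_lowerFactor : HasDerivAt (lowerFactor m n k c)
    ((1 - c) ^ 2 * (1 + c / 2)
      + x * (2 * (n - k * c ^ 2 + 4 * m * c - 2 * (1 - c ^ 2) * m + (m * x + c / 4) ^ 2)
        + x * (2 * m * (m * x + c / 4)))) x := by
  refine (hasDerivAt_quad_mul ((1 - c) ^ 4) ((1 - c) ^ 2 * (1 + c / 2))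
    (n - k * c ^ 2 + 4 * m * c - 2 * (1 - c ^ 2) * m) 0 m (c / 4) x).congr_of_eventuallyEq ?_
  exact Filter.Eventually.of_forall fun y => by simp [lowerFactor]

lemma hasDerivAt_upperFactor : HasDerivAt (upperFactor m n k c)
    (-((1 + c) * (1 + (1 - c) * c / 2))
      + x * (2 * (n - k * c ^ 2 - 4 * m * c - 2 * (1 - c ^ 2) * m + (m * x + c / 4) ^ 2)
        + x * (2 * m * (m * x + c / 4)))) x := by
  refine (hasDerivAt_quad_mul ((1 + c) ^ 4) (-((1 + c) * (1 + (1 - c) * c / 2)))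
    (n - k * c ^ 2 - 4 * m * c - 2 * (1 - c ^ 2) * m) 0 m (c / 4) x).congr_of_eventuallyEq ?_
  exact Filter.Eventually.of_forall fun y => by simp [upperFactor]; ring

lemma hasDerivAt_mul_correction : HasDerivAt (fun x => x * correction m c x)
    (4 * c * (1 + c ^ 2) - 2 * x - 12 * m * c * x ^ 2) x := by
  have h := hasDerivAt_id' x
  have h1 := h.mul ((h.const_sub (4 * c * (1 + c ^ 2))).sub ((h.pow 2).const_mul (4 * m * c)))
  refine h1.congr_deriv ?_
  simp
  ring

variable (hm : 0.00285 ≤ m) (hm' : m ≤ 0.003) (hn : 0 ≤ n) (hn' : n ≤ 0.005)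
  (hk : 0 ≤ k) (hk' : k ≤ 0.016) (hc : 0 ≤ c) (hc' : c < 1)

include hm hm' hn hn' hk hk' hc hc'

omit hn hk' in
lemma curvature_le (hx : -1 ≤ x) (hx' : x ≤ 0) :
    n - k * c ^ 2 + 4 * m * c - 2 * (1 - c ^ 2) * m + (m * x + c / 4) ^ 2 ≤ c / 4 ∧
    2 * (n - k * c ^ 2 + 4 * m * c - 2 * (1 - c ^ 2) * m + (m * x + c / 4) ^ 2)
      + x * (2 * m * (m * x + c / 4)) ≤ c / 2 := by
  norm_num at *
  have hc2 : c ^ 2 ≤ c := by nlinarith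
  have h1 : 0 ≤ k * c ^ 2 := by positivity
  have h2 : m * c ≤ 3 / 1000 * c := mul_le_mul_of_nonneg_right hm' hc
  have h3 : m * c ^ 2 ≤ 3 / 1000 * c :=
    (mul_le_mul hm' hc2 (by positivity) (by norm_num))
  have h4 : (m * x) ^ 2 ≤ 9 / 1000000 := by
    have : m * x ≤ 0 := mul_nonpos_of_nonneg_of_nonpos (by linarith) hx'
    have : -(3 / 1000) ≤ m * x := by nlinarith
    nlinarith
  have h5 : m * x * c ≤ 0 :=
    mul_nonpos_of_nonpos_of_nonneg (mul_nonpos_of_nonneg_of_nonpos (by linarith) hx') hc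
  constructor <;> nlinarith

omit hn hk' in
lemma le_deriv_lowerFactor (hx : -(1 - c) ^ 2 < x) (hx' : x < 0) :
    (1 - c) ^ 2 ≤ (1 - c) ^ 2 * (1 + c / 2)
      + x * (2 * (n - k * c ^ 2 + 4 * m * c - 2 * (1 - c ^ 2) * m + (m * x + c / 4) ^ 2)
        + x * (2 * m * (m * x + c / 4))) := by
  have h := (curvature_le hm hm' hn' hk hc hc' (x := x) (by nlinarith) hx'.le).2
  nlinarith [mul_le_mul_of_nonpos_left h hx'.le]

omit hn hk' in
lemma lowerFactor_lt (hx : -(1 - c) ^ 2 < x) (hx' : x < 0) :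
    lowerFactor m n k c x < (1 - c) ^ 4 := by
  have h := (curvature_le hm hm' hn' hk hc hc' (x := x) (by nlinarith) hx'.le).1
  have h1 := mul_le_mul_of_nonneg_left h (sq_nonneg x)
  have h2 : 0 < (1 - c) ^ 2 := pow_pos (by linarith) 2
  unfold lowerFactor
  have h3 : x ^ 2 * (c / 4) ≤ -x * (1 - c) ^ 2 * (c / 4) :=
    mul_le_mul_of_nonneg_right (by nlinarith) (by linarith)
  have h4 : (1 - c) ^ 2 * x < 0 := mul_neg_of_pos_of_neg h2 hx'
  nlinarith

omit hn hk' in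
lemma lowerFactor_left_nonpos : lowerFactor m n k c (-(1 - c) ^ 2) ≤ 0 := by
  have h := (curvature_le hm hm' hn' hk hc hc' (x := -(1 - c) ^ 2) (by nlinarith)
    (by nlinarith)).1
  have h1 := mul_le_mul_of_nonneg_left h (sq_nonneg (-(1 - c) ^ 2))
  unfold lowerFactor
  have h2 : 0 ≤ (1 - c) ^ 4 * c := by positivity
  linarith

lemma upper_curvature_bounds (hx : -1 ≤ x) (hx' : x ≤ 0) :
    -0.05 ≤ n - k * c ^ 2 - 4 * m * c - 2 * (1 - c ^ 2) * m + (m * x + c / 4) ^ 2 ∧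
    -0.2 ≤ 2 * (n - k * c ^ 2 - 4 * m * c - 2 * (1 - c ^ 2) * m + (m * x + c / 4) ^ 2)
      + x * (2 * m * (m * x + c / 4)) ∧
    2 * (n - k * c ^ 2 - 4 * m * c - 2 * (1 - c ^ 2) * m + (m * x + c / 4) ^ 2)
      + x * (2 * m * (m * x + c / 4)) ≤ c / 2 := by
  have h0 := (curvature_le hm hm' hn' hk hc hc' hx hx').2
  norm_num at *
  have hmc : 0 ≤ m * c := mul_nonneg (by linarith) hc
  have hmc1 : m * c ≤ 3 / 1000 := by nlinarith
  have hmc2 : m * c ^ 2 ≤ 3 / 1000 := by nlinarith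
  have hmc3 : 0 ≤ m * c ^ 2 := mul_nonneg (by linarith) (by positivity)
  have hkc : k * c ^ 2 ≤ 16 / 1000 := by nlinarith [sq_nonneg c]
  have hmcx : -(3 / 1000) ≤ m * c * x := by nlinarith
  refine ⟨by nlinarith [sq_nonneg (m * x + c / 4)],
    by nlinarith [sq_nonneg (m * x + c / 4), sq_nonneg (m * x)], by linarith⟩

lemma one_le_upperFactor (hx : -1 ≤ x) (hx' : x ≤ 0) : 1 ≤ upperFactor m n k c x := by
  have h := (upper_curvature_bounds hm hm' hn hn' hk hk' hc hc' hx hx').1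
  have h1 := mul_le_mul_of_nonneg_left h (sq_nonneg x)
  unfold upperFactor
  have h2 : 1 ≤ (1 + c) ^ 4 := one_le_pow₀ (by linarith)
  have h3 : 1 ≤ (1 + c) * (1 + (1 - c) * c / 2) := by
    nlinarith [mul_nonneg hc (sub_nonneg.2 hc'.le)]
  norm_num at *
  nlinarith

lemma deriv_upperFactor_bounds (hx : -(1 - c) ^ 2 < x) (hx' : x < 0) :
    0 < -(-((1 + c) * (1 + (1 - c) * c / 2))
      + x * (2 * (n - k * c ^ 2 - 4 * m * c - 2 * (1 - c ^ 2) * m + (m * x + c / 4) ^ 2)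
        + x * (2 * m * (m * x + c / 4)))) ∧
    (1 - c) ^ 2 * -(-((1 + c) * (1 + (1 - c) * c / 2))
      + x * (2 * (n - k * c ^ 2 - 4 * m * c - 2 * (1 - c ^ 2) * m + (m * x + c / 4) ^ 2)
        + x * (2 * m * (m * x + c / 4)))) ≤ 1 := by
  have hx1 : -1 ≤ x := by nlinarith
  obtain ⟨-, h1, h2⟩ := upper_curvature_bounds hm hm' hn hn' hk hk' hc hc' hx1 hx'.le
  generalize 2 * (n - k * c ^ 2 - 4 * m * c - 2 * (1 - c ^ 2) * m + (m * x + c / 4) ^ 2)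
    + x * (2 * m * (m * x + c / 4)) = z at *
  have hd : 0 < 1 - c := by linarith
  have hcd : 0 ≤ (1 - c) * c := by positivity
  constructor
  · norm_num at h1
    nlinarith
  · have hd2 : (1 - c) ^ 2 ≤ 1 := by nlinarith
    have h3 : (1 - c) ^ 2 * (1 + c) ≤ 1 - c := by nlinarith [mul_nonneg hcd hc]
    have h4 : (1 - c) ^ 2 * (1 + c) * (1 + (1 - c) * c / 2) ≤ (1 - c) * (1 + c / 2) :=
      mul_le_mul h3 (by nlinarith) (by positivity) hd.le
    have h5 : -x * z ≤ c / 2 := by nlinarith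
    have h6 : (1 - c) ^ 2 * (-x * z) ≤ c / 2 := by
      nlinarith [mul_le_mul_of_nonneg_left h5 (sq_nonneg (1 - c))]
    nlinarith

lemma deriv_lower_mul_upper_pos (hx : -(1 - c) ^ 2 < x) (hx' : x < 0) :
    0 < deriv (fun x => lowerFactor m n k c x * upperFactor m n k c x) x := by
  have h1 := le_deriv_lowerFactor hm hm' hn' hk hc hc' hx hx'
  have h2 := lowerFactor_lt hm hm' hn' hk hc hc' hx hx'
  have h3 := one_le_upperFactor hm hm' hn hn' hk hk' hc hc' (x := x) (by nlinarith) hx'.le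
  obtain ⟨h4, h5⟩ := deriv_upperFactor_bounds hm hm' hn hn' hk hk' hc hc' hx hx'
  have hD := hasDerivAt_lowerFactor (m := m) (n := n) (k := k) (c := c) (x := x)
  have hS := hasDerivAt_upperFactor (m := m) (n := n) (k := k) (c := c) (x := x)
  rw [(hD.fun_mul hS).deriv]
  have hd : 0 < (1 - c) ^ 2 := pow_pos (by linarith) 2
  have h6 := mul_lt_mul_of_pos_right h2 h4
  have h7 := mul_le_mul_of_nonneg_left h5 hd.le
  have h8 := mul_le_mul h1 h3 zero_le_one (hd.le.trans h1)
  linarith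

omit hn hn' hk hk' in
lemma correction_nonneg (hx : -1 ≤ x) (hx' : x ≤ 0) : 0 ≤ correction m c x := by
  unfold correction
  norm_num at *
  have hmc : m * c ≤ 3 / 1000 := by nlinarith
  have hmc' : 0 ≤ m * c := mul_nonneg (by linarith) hc
  have : 0 ≤ c * (1 + c ^ 2) := by positivity
  have : m * c * x ^ 2 ≤ 3 / 1000 * -x :=
    mul_le_mul hmc (by nlinarith) (by positivity) (by norm_num)
  linarith

omit hn hn' hk hk' in
lemma deriv_mul_correction_nonneg (hx : -1 ≤ x) (hx' : x ≤ 0) :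
    0 ≤ 4 * c * (1 + c ^ 2) - 2 * x - 12 * m * c * x ^ 2 := by
  norm_num at *
  have hmc : m * c ≤ 3 / 1000 := by nlinarith
  have hmc' : 0 ≤ m * c := mul_nonneg (by linarith) hc
  have : 0 ≤ c * (1 + c ^ 2) := by positivity
  have : m * c * x ^ 2 ≤ 3 / 1000 * -x :=
    mul_le_mul hmc (by nlinarith) (by positivity) (by norm_num)
  linarith

end Factors

/-- Lemma 5 of the paper: the resolvent `f` satisfies `f'(x) > 0` on `(−(1−c)², 0)` and
has exactly one zero on `[−(1−c)², 0]`. -/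
theorem stmt_18 (c : ℝ) (hc : c ∈ Set.Ico (0 : ℝ) 1) (s : ℝ)
    (hs : s = Real.sqrt (1 - c ^ 2)) :
    (∀ x ∈ Set.Ioo (-(1 - c) ^ 2) (0 : ℝ), 0 < deriv (quarticF c s) x) ∧
    (∃! x : ℝ, x ∈ Set.Icc (-(1 - c) ^ 2) (0 : ℝ) ∧ quarticF c s x = 0) := by
  obtain ⟨hc0, hc1⟩ := hc
  have hs2 : s ^ 2 = 1 - c ^ 2 := by
    rw [hs, Real.sq_sqrt (by nlinarith)]
  have hf := funext (quarticF_eq hs2)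
  obtain ⟨h1, h2, h3, h4, h5, h6⟩ := σ_bounds
  have hm : 0.00285 ≤ σ3 / 64 := by norm_num at *; linarith
  have hm' : σ3 / 64 ≤ 0.003 := by norm_num at *; linarith
  have hn : 0 ≤ (2 - σ1) / 16 := by linarith
  have hn' : (2 - σ1) / 16 ≤ 0.005 := by norm_num at *; linarith
  have hk : 0 ≤ (1 - σ2 + 2 * σ3) / 16 := by linarith
  have hk' : (1 - σ2 + 2 * σ3) / 16 ≤ 0.016 := by norm_num at *; linarith
  generalize σ3 / 64 = m at *
  generalize (2 - σ1) / 16 = n at *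
  generalize (1 - σ2 + 2 * σ3) / 16 = k at *
  generalize u1 * u2 * u3 / 8 = p at *
  have hE (x : ℝ) := hasDerivAt_mul_correction (m := m) (c := c) (x := x)
  have hDS (x : ℝ) : DifferentiableAt ℝ
      (fun x => lowerFactor m n k c x * upperFactor m n k c x) x :=
    hasDerivAt_lowerFactor.differentiableAt.fun_mul hasDerivAt_upperFactor.differentiableAt
  have hder (x : ℝ) := (((hDS x).hasDerivAt.fun_sub
    (((hE x).fun_pow 2).const_mul (p ^ 2))).const_mul (1 / 16 : ℝ))
  have hd0 : 0 < (1 - c) ^ 2 := pow_pos (by linarith) 2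
  have hd1 : (1 - c) ^ 2 ≤ 1 := by nlinarith
  have hpos : ∀ x ∈ Set.Ioo (-(1 - c) ^ 2) (0 : ℝ), 0 < deriv (quarticF c s) x := by
    rintro x ⟨hx, hx'⟩
    rw [hf, (hder x).deriv]
    have g1 := deriv_lower_mul_upper_pos hm hm' hn hn' hk hk' hc0 hc1 hx hx'
    have g2 := correction_nonneg hm hm' hc0 hc1 (x := x) (by linarith) hx'.le
    have g3 := deriv_mul_correction_nonneg hm hm' hc0 hc1 (x := x)
      (by linarith) hx'.le
    have g4 := mul_nonneg (sq_nonneg p)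
      (mul_nonneg (mul_nonneg (neg_nonneg.2 hx'.le) g2) g3)
    norm_num
    linarith
  have hcont : ContinuousOn (quarticF c s) (Set.Icc (-(1 - c) ^ 2) 0) := by
    rw [hf]
    exact fun x _ => (hder x).continuousAt.continuousWithinAt
  have hmono : StrictMonoOn (quarticF c s) (Set.Icc (-(1 - c) ^ 2) 0) :=
    strictMonoOn_of_deriv_pos (convex_Icc _ _) hcont (by rwa [interior_Icc])
  have hleft : quarticF c s (-(1 - c) ^ 2) ≤ 0 := by
    rw [hf]
    have g1 := lowerFactor_left_nonpos hm hm' hn' hk hc0 hc1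
    have g2 := one_le_upperFactor hm hm' hn hn' hk hk' hc0 hc1 (x := -(1 - c) ^ 2)
      (by linarith) (by linarith)
    have g3 := mul_nonneg (neg_nonneg.2 g1) (zero_le_one.trans g2)
    have g4 := mul_nonneg (sq_nonneg p) (sq_nonneg (-(1 - c) ^ 2 * correction m c (-(1 - c) ^ 2)))
    linarith
  have hright : 0 ≤ quarticF c s 0 := by
    rw [hf]
    simp [lowerFactor, upperFactor]
    positivity
  obtain ⟨x, hx, hx0⟩ := intermediate_value_Icc (by linarith) hcont ⟨hleft, hright⟩
  exact ⟨hpos, x, ⟨hx, hx0⟩, fun y hy => hmono.injOn hy.1 hx (hy.2.trans hx0.symm)⟩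
end
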